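/- Under the converse setup, for every i ∈ {1,…,n}: (a) Y^{i−1} is conditionally independent of X̃_i given (X̃^{i−1}, W, K, Y_i^n), and (b) (X^{i−1}, Z^{i−1}) is conditionally independent of X̃_i given (X̃^{i−1}, W, K, Y_i^n); consequently H(X̃_i | Y_i, Y_{i+1}^n, W, K, X̃^{i−1}) ≥ H(X̃_i | Y_i, Y_{i+1}^n, W, K, X^{i−1}, Z^{i−1}) can be replaced by equality-type data-processing steps in the secrecy converse, i.e., H(X̃_i | Y_i^n, W, K, X̃^{i−1}) = H(X̃_i | Y_i^n, W, K, X̃^{i−1}, Y^{i−1}) ≥ H(X̃_i | Y_i^n, W, K, X̃^{i−1}, X^{i−1}, Z^{i−1}). -/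

import Mathlib

open MeasureTheory

noncomputable section

/-- Probability mass `P[X = x]` of a finitely-valued random variable `X` on `(Ω, μ)`. -/
def pmass {Ω : Type*} [MeasurableSpace Ω] (μ : Measure Ω) {α : Type*}
    (X : Ω → α) (x : α) : ℝ :=
  (μ (X ⁻¹' {x})).toReal

/-- Shannon entropy `H(X)` (in nats) of a finitely-valued random variable. -/
def entropyRV {Ω : Type*} [MeasurableSpace Ω] (μ : Measure Ω) {α : Type*} [Fintype α]
    (X : Ω → α) : ℝ :=
  ∑ x : α, Real.negMulLog (pmass μ X x)

/-- Conditional Shannon entropy `H(X | Y)`. -/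
def condEntropyRV {Ω : Type*} [MeasurableSpace Ω] (μ : Measure Ω) {α β : Type*}
    [Fintype α] [Fintype β] (X : Ω → α) (Y : Ω → β) : ℝ :=
  entropyRV μ (fun ω => (X ω, Y ω)) - entropyRV μ Y

/-- Mutual information `I(X;Y)`. -/
def mutualInfoRV {Ω : Type*} [MeasurableSpace Ω] (μ : Measure Ω) {α β : Type*}
    [Fintype α] [Fintype β] (X : Ω → α) (Y : Ω → β) : ℝ :=
  entropyRV μ X + entropyRV μ Y - entropyRV μ (fun ω => (X ω, Y ω))

/-- Conditional mutual information `I(X;Y|Z)`. -/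
def condMutualInfoRV {Ω : Type*} [MeasurableSpace Ω] (μ : Measure Ω) {α β γ : Type*}
    [Fintype α] [Fintype β] [Fintype γ] (X : Ω → α) (Y : Ω → β) (Z : Ω → γ) : ℝ :=
  entropyRV μ (fun ω => (X ω, Z ω)) + entropyRV μ (fun ω => (Y ω, Z ω))
    - entropyRV μ Z - entropyRV μ (fun ω => (X ω, Y ω, Z ω))

/-- Expected value `E[f(X)]` of a function of a finitely-valued random variable. -/
def expVal {Ω : Type*} [MeasurableSpace Ω] (μ : Measure Ω) {α : Type*} [Fintype α]
    (X : Ω → α) (f : α → ℝ) : ℝ :=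
  ∑ a : α, pmass μ X a * f a

/-- Independence of two finitely-valued random variables, via their joint mass. -/
def IndepRV {Ω : Type*} [MeasurableSpace Ω] (μ : Measure Ω) {α β : Type*}
    (X : Ω → α) (Y : Ω → β) : Prop :=
  ∀ a b, pmass μ (fun ω => (X ω, Y ω)) (a, b) = pmass μ X a * pmass μ Y b

/-- Conditional independence of `A` and `C` given `B` (the Markov chain `A − B − C`)
for finitely-valued random variables, via joint masses. -/
def CondIndepRV {Ω : Type*} [MeasurableSpace Ω] (μ : Measure Ω) {α β γ : Type*}
    (A : Ω → α) (B : Ω → β) (C : Ω → γ) : Prop :=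
  ∀ a b c,
    pmass μ (fun ω => (A ω, B ω, C ω)) (a, b, c) * pmass μ B b
      = pmass μ (fun ω => (A ω, B ω)) (a, b) * pmass μ (fun ω => (B ω, C ω)) (b, c)

/-- `X` is uniformly distributed on its (finite) alphabet. -/
def UniformRV {Ω : Type*} [MeasurableSpace Ω] (μ : Measure Ω) {α : Type*} [Fintype α]
    (X : Ω → α) : Prop :=
  ∀ x, pmass μ X x = 1 / (Fintype.card α : ℝ)

/-- The sequence `S = (S_1, …, S_n)` is i.i.d. with single-letter pmf `p`. -/
def HasIIDLaw {Ω : Type*} [MeasurableSpace Ω] (μ : Measure Ω) {α : Type*} {n : ℕ}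
    (S : Ω → Fin n → α) (p : α → ℝ) : Prop :=
  ∀ v : Fin n → α, pmass μ S v = ∏ i, p (v i)

/-- `[a]⁻ = min {a, 0}`. -/
def negPartR (a : ℝ) : ℝ := min a 0

/-!
Fix `i` and split the source sequence into the past block `P = (S_j)_{j < i}` and the future block
`F = (S_j)_{j ≥ i}`. Since the letters are independent and `K` is independent of all of them, `P` is
independent of `(F, K)`. The conditioning variable `(X̃^{i-1}, W, K, Y_i^n)` consists of a function
`u` of `P` together with a function of `(u, F, K)`: the encoder sees the past only through
`X̃^{i-1}`. Hence, conditionally on it, every function of `P` is independent of every function of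
`(F, K)`, in particular of `X̃_i`. Adjoining to the conditioning a variable that is conditionally
independent of `X̃_i` does not change the conditional entropy, so both entropy comparisons are
equalities.
-/

section

open ProbabilityTheory

variable {Ω : Type*} [MeasurableSpace Ω] {μ : Measure Ω}

section Independence

theorem indepFun_prodMk_of_indepFun_prodMk {α β γ : Type*} [MeasurableSpace α]
    [MeasurableSpace β] [MeasurableSpace γ] [IsFiniteMeasure μ] {A : Ω → α} {B : Ω → β} {C : Ω → γ}
    (hA : Measurable A) (hB : Measurable B) (hC : Measurable C)
    (hAB : IndepFun A B μ) (hABC : IndepFun (fun ω => (A ω, B ω)) C μ) :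
    IndepFun A (fun ω => (B ω, C ω)) μ := by
  have hBC : IndepFun B C μ := hABC.comp measurable_snd measurable_id
  rw [indepFun_iff_map_prod_eq_prod_map_map hA.aemeasurable (hB.prodMk hC).aemeasurable,
    hBC.map_prod_eq_prod_map_map hB.aemeasurable hC.aemeasurable, ← Measure.prodAssoc_prod,
    ← hAB.map_prod_eq_prod_map_map hA.aemeasurable hB.aemeasurable,
    ← hABC.map_prod_eq_prod_map_map (hA.prodMk hB).aemeasurable hC.aemeasurable,
    Measure.map_map MeasurableEquiv.prodAssoc.measurable ((hA.prodMk hB).prodMk hC)]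
  rfl

theorem indepFun_subtype_of_disjoint {ι : Type*} [Finite ι] {σ : ι → Type*}
    [∀ j, MeasurableSpace (σ j)] {S : Ω → ∀ j, σ j} (hS : Measurable S)
    (hindep : iIndepFun (fun j ω => S ω j) μ) {p q : ι → Prop} (hpq : Disjoint p q) :
    IndepFun (fun ω (j : {j // p j}) => S ω j) (fun ω (j : {j // q j}) => S ω j) μ := by
  classical
  have := Fintype.ofFinite ι
  have hdisj : Disjoint (Finset.univ.filter p) (Finset.univ.filter q) :=
    Finset.disjoint_filter.2 fun j _ hp hq => Pi.disjoint_iff.1 hpq j |>.le_bot ⟨hp, hq⟩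
  have hblocks := hindep.indepFun_finset _ _ hdisj fun j => (measurable_pi_apply j).comp hS
  exact hblocks.comp
    (φ := fun v (j : {j // p j}) => v ⟨j, Finset.mem_filter.2 ⟨Finset.mem_univ _, j.2⟩⟩)
    (ψ := fun v (j : {j // q j}) => v ⟨j, Finset.mem_filter.2 ⟨Finset.mem_univ _, j.2⟩⟩)
    (measurable_pi_lambda _ fun _ => measurable_pi_apply _)
    (measurable_pi_lambda _ fun _ => measurable_pi_apply _)

theorem IndepRV.indepFun {α β : Type*} [Countable α] [Countable β] [MeasurableSpace α]
    [MeasurableSpace β] [DiscreteMeasurableSpace α] [DiscreteMeasurableSpace β] [IsFiniteMeasure μ]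
    {X : Ω → α} {Y : Ω → β} (hX : Measurable X) (hY : Measurable Y) (h : IndepRV μ X Y) :
    IndepFun X Y μ := by
  rw [indepFun_iff_map_prod_eq_prod_map_map hX.aemeasurable hY.aemeasurable]
  refine Measure.ext_of_measureReal_singleton fun ⟨x, y⟩ => ?_
  rw [← Set.singleton_prod_singleton, measureReal_prod_prod, Set.singleton_prod_singleton,
    map_measureReal_apply (hX.prodMk hY) .of_discrete, map_measureReal_apply hX .of_discrete,
    map_measureReal_apply hY .of_discrete]
  exact h x y

end Independence

section Mass

variable {τ β : Type*}

theorem pmass_comp [IsFiniteMeasure μ] [Fintype τ] [MeasurableSpace τ]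
    [MeasurableSingletonClass τ] [DecidableEq β] {T : Ω → τ} (hT : Measurable T) (f : τ → β)
    (y : β) : pmass μ (fun ω => f (T ω)) y = ∑ t with f t = y, pmass μ T t := by
  have hfiber : (fun ω => f (T ω)) ⁻¹' {y} = T ⁻¹' ({t | f t = y} : Finset τ) := by
    ext ω
    simp
  exact (congrArg μ.real hfiber).trans
    (sum_measureReal_preimage_singleton _ fun t _ => hT (measurableSet_singleton t)).symm

theorem sum_pmass [IsProbabilityMeasure μ] [Fintype τ] [MeasurableSpace τ]
    [MeasurableSingletonClass τ] {T : Ω → τ} (hT : Measurable T) : ∑ t, pmass μ T t = 1 := by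
  have hfibers := sum_measureReal_preimage_singleton (μ := μ) Finset.univ fun t _ =>
    hT (measurableSet_singleton t)
  rwa [Finset.coe_univ, Set.preimage_univ, probReal_univ] at hfibers

theorem pmass_comp_ne_zero [IsFiniteMeasure μ] {T : Ω → τ} (f : τ → β) {t : τ}
    (ht : pmass μ T t ≠ 0) : pmass μ (fun ω => f (T ω)) (f t) ≠ 0 := by
  have hle : pmass μ T t ≤ pmass μ (fun ω => f (T ω)) (f t) :=
    measureReal_mono fun _ hω => congrArg f hω
  exact ((measureReal_nonneg.lt_of_ne' ht).trans_le hle).ne'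

theorem pmass_comp_of_injective (X : Ω → τ) {f : τ → β}
    (hf : Function.Injective f) (x : τ) :
    pmass μ (fun ω => f (X ω)) (f x) = pmass μ X x := by
  have hfiber : (fun ω => f (X ω)) ⁻¹' {f x} = X ⁻¹' {x} := by
    ext ω
    exact hf.eq_iff
  rw [pmass, hfiber, pmass]

end Mass

section ProductLaw

variable {ι : Type*} [Fintype ι] {σ : ι → Type*} [∀ i, MeasurableSpace (σ i)]
  [∀ i, MeasurableSingletonClass (σ i)] {S : Ω → ∀ i, σ i} {p : ∀ i, σ i → ℝ}

theorem pmass_eval_of_pmass_eq_prod [DecidableEq ι] [∀ i, Fintype (σ i)] [IsFiniteMeasure μ]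
    (hS : Measurable S) (h : ∀ v, pmass μ S v = ∏ i, p i (v i)) (i : ι) (a : σ i) :
    pmass μ (fun ω => S ω i) a = p i a * ∏ j ∈ Finset.univ.erase i, ∑ b, p j b := by
  classical
  calc pmass μ (fun ω => S ω i) a
      = ∑ v : ∀ j, σ j with v i = a, ∏ j, p j (v j) := by
        rw [pmass_comp hS (fun v => v i)]
        exact Finset.sum_congr rfl fun v _ => h v
    _ = ∏ j, ∑ b ∈ Function.update (fun j => (Finset.univ : Finset (σ j))) i {a} j, p j b := by
        rw [Finset.prod_univ_sum, Fintype.piFinset_update_singleton_eq_filter_piFinset_eq _ i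
          (Finset.mem_univ a), Fintype.piFinset_univ]
    _ = p i a * ∏ j ∈ Finset.univ.erase i, ∑ b, p j b := by
        rw [← Finset.mul_prod_erase _ _ (Finset.mem_univ i), Function.update_self,
          Finset.sum_singleton]
        congr 1
        refine Finset.prod_congr rfl fun j hj => ?_
        rw [Function.update_of_ne (Finset.ne_of_mem_erase hj)]

-- The total masses of the factors multiply to `1`, so the `i`-th marginal is `p i` divided by its
-- total mass.
theorem iIndepFun_of_pmass_eq_prod [∀ i, Finite (σ i)] [IsProbabilityMeasure μ] (hS : Measurable S)
    (h : ∀ v, pmass μ S v = ∏ i, p i (v i)) : iIndepFun (fun i ω => S ω i) μ := by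
  classical
  have (i : ι) := Fintype.ofFinite (σ i)
  have hmeas (i : ι) : Measurable fun ω => S ω i := (measurable_pi_apply i).comp hS
  have hmass : ∏ i, ∑ b, p i b = 1 := by
    rw [Finset.prod_univ_sum, Fintype.piFinset_univ, ← sum_pmass (μ := μ) hS]
    exact Finset.sum_congr rfl fun v _ => (h v).symm
  have hmarginals (v : ∀ i, σ i) : pmass μ S v = ∏ i, pmass μ (fun ω => S ω i) (v i) := by
    have hrest (i : ι) : ∏ j ∈ Finset.univ.erase i, ∑ b, p j b = (∑ b, p i b)⁻¹ :=
      eq_inv_of_mul_eq_one_right ((Finset.mul_prod_erase _ _ (Finset.mem_univ i)).trans hmass)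
    simp only [pmass_eval_of_pmass_eq_prod hS h, hrest, Finset.prod_mul_distrib,
      Finset.prod_inv_distrib, hmass, inv_one, mul_one, h]
  rw [iIndepFun_iff_map_fun_eq_pi_map fun i => (hmeas i).aemeasurable]
  refine Measure.ext_of_measureReal_singleton fun v => ?_
  rw [map_measureReal_apply hS (measurableSet_singleton v), measureReal_def (Measure.pi _),
    Measure.pi_singleton, ENNReal.toReal_prod]
  refine (hmarginals v).trans (Finset.prod_congr rfl fun i _ => ?_)
  rw [Measure.map_apply (hmeas i) (measurableSet_singleton (v i)), pmass]

theorem HasIIDLaw.iIndepFun {σ : Type*} [Finite σ] [MeasurableSpace σ]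
    [MeasurableSingletonClass σ] [IsProbabilityMeasure μ] {n : ℕ} {S : Ω → Fin n → σ} {p : σ → ℝ}
    (h : HasIIDLaw μ S p) (hS : Measurable S) : iIndepFun (fun i ω => S ω i) μ :=
  iIndepFun_of_pmass_eq_prod hS h

end ProductLaw

section Entropy

variable {α β β' γ δ : Type*}

theorem entropyRV_comp_of_injective [Fintype α] [Fintype β] (X : Ω → α) {f : α → β}
    (hf : Function.Injective f) : entropyRV μ (fun ω => f (X ω)) = entropyRV μ X := by
  have hoff (y : β) (hy : y ∉ Set.range f) :
      Real.negMulLog (pmass μ (fun ω => f (X ω)) y) = 0 := by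
    have hempty : (fun ω => f (X ω)) ⁻¹' {y} = ∅ :=
      Set.eq_empty_of_forall_notMem fun ω hω => hy ⟨X ω, hω⟩
    simp [pmass, hempty]
  exact (Fintype.sum_of_injective f hf _ _ hoff fun x => by
    rw [pmass_comp_of_injective X hf]).symm

theorem condEntropyRV_comp_of_injective [Fintype α] [Fintype β] [Fintype γ] (X : Ω → γ)
    (Y : Ω → α) {f : α → β} (hf : Function.Injective f) :
    condEntropyRV μ X (fun ω => f (Y ω)) = condEntropyRV μ X Y := by
  rw [condEntropyRV, condEntropyRV, entropyRV_comp_of_injective Y hf,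
    ← entropyRV_comp_of_injective (fun ω => (X ω, Y ω))
      (Function.injective_id.prodMap hf)]
  rfl

theorem entropyRV_comp [IsFiniteMeasure μ] [Fintype β] {τ : Type*} [Fintype τ]
    [MeasurableSpace τ] [MeasurableSingletonClass τ] {T : Ω → τ} (hT : Measurable T) (f : τ → β) :
    entropyRV μ (fun ω => f (T ω))
      = -∑ t, pmass μ T t * Real.log (pmass μ (fun ω => f (T ω)) (f t)) := by
  classical
  rw [entropyRV, ← Finset.sum_fiberwise Finset.univ f, ← Finset.sum_neg_distrib]
  refine Finset.sum_congr rfl fun y _ => ?_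
  have hfiber : ∑ t with f t = y, pmass μ T t * Real.log (pmass μ (fun ω => f (T ω)) (f t))
      = ∑ t with f t = y, pmass μ T t * Real.log (pmass μ (fun ω => f (T ω)) y) :=
    Finset.sum_congr rfl fun t ht => by rw [(Finset.mem_filter.1 ht).2]
  rw [hfiber, ← Finset.sum_mul, ← pmass_comp hT f, Real.negMulLog, neg_mul]

variable [IsFiniteMeasure μ] [Fintype γ] [MeasurableSpace α] [MeasurableSpace β]
  [MeasurableSpace γ] [MeasurableSingletonClass α] [MeasurableSingletonClass β]
  [MeasurableSingletonClass γ] {A : Ω → α} {B : Ω → β} {C : Ω → γ}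

theorem CondIndepRV.condEntropyRV_eq [Fintype α] [Fintype β] (h : CondIndepRV μ A B C)
    (hA : Measurable A) (hB : Measurable B) (hC : Measurable C) :
    condEntropyRV μ C B = condEntropyRV μ C (fun ω => (A ω, B ω)) := by
  have hT := hA.prodMk (hB.prodMk hC)
  have hswap : entropyRV μ (fun ω => (C ω, B ω)) = entropyRV μ (fun ω => (B ω, C ω)) :=
    entropyRV_comp_of_injective (fun ω => (B ω, C ω)) Prod.swap_injective
  have hrotate : entropyRV μ (fun ω => (C ω, A ω, B ω)) = entropyRV μ (fun ω => (A ω, B ω, C ω)) :=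
    entropyRV_comp_of_injective (fun ω => (A ω, B ω, C ω)) (f := fun t => (t.2.2, t.1, t.2.1))
      fun s t hst => by grind
  rw [condEntropyRV, condEntropyRV, hswap, hrotate, entropyRV_comp hT (fun t => t),
    entropyRV_comp hT (fun t => t.2), entropyRV_comp hT (fun t => t.2.1),
    entropyRV_comp hT (fun t => (t.1, t.2.1)), ← sub_eq_zero]
  simp only [neg_sub_neg, ← Finset.sum_sub_distrib]
  refine Finset.sum_eq_zero fun ⟨a, b, c⟩ _ => ?_
  obtain hzero | hne := eq_or_ne (pmass μ (fun ω => (A ω, B ω, C ω)) (a, b, c)) 0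
  · simp only [hzero, zero_mul, sub_self]
  have hlog := congrArg Real.log (h a b c)
  rw [Real.log_mul hne (pmass_comp_ne_zero (fun t => t.2.1) hne),
    Real.log_mul (pmass_comp_ne_zero (fun t => (t.1, t.2.1)) hne)
      (pmass_comp_ne_zero (fun t => t.2) hne)] at hlog
  linear_combination (pmass μ (fun ω => (A ω, B ω, C ω)) (a, b, c)) * hlog

theorem CondIndepRV.condEntropyRV_comp_eq [Finite α] [Fintype β'] [Fintype δ]
    (h : CondIndepRV μ A B C) (hA : Measurable A) (hB : Measurable B) (hC : Measurable C)
    {f : β → β'} {g : α × β → δ} (hf : Function.Injective f) (hg : Function.Injective g) :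
    condEntropyRV μ C (fun ω => f (B ω)) = condEntropyRV μ C (fun ω => g (A ω, B ω)) := by
  have := Fintype.ofFinite α
  have := Fintype.ofInjective f hf
  rw [condEntropyRV_comp_of_injective C B hf, h.condEntropyRV_eq hA hB hC,
    condEntropyRV_comp_of_injective C (fun ω => (A ω, B ω)) hg]

end Entropy

section Blocks

theorem condIndepRV_comp_of_indepFun {π φ α υ γ δ : Type*} [MeasurableSpace π] [MeasurableSpace φ]
    [DiscreteMeasurableSpace π] [DiscreteMeasurableSpace φ] {P : Ω → π} {F : Ω → φ}
    (h : IndepFun P F μ) (a : π → α) (u : π → υ) (g : υ → φ → δ) (c : φ → γ) :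
    CondIndepRV μ (fun ω => a (P ω)) (fun ω => (u (P ω), g (u (P ω)) (F ω)))
      (fun ω => c (F ω)) := by
  rintro a₀ ⟨u₀, g₀⟩ c₀
  have hrect (s : Set π) (t : Set φ) :
      μ.real (P ⁻¹' s ∩ F ⁻¹' t) = μ.real (P ⁻¹' s) * μ.real (F ⁻¹' t) := by
    simp only [measureReal_def, h.measure_inter_preimage_eq_mul s t .of_discrete .of_discrete,
      ENNReal.toReal_mul]
  have habc : (fun ω => (a (P ω), (u (P ω), g (u (P ω)) (F ω)), c (F ω))) ⁻¹'
      {(a₀, (u₀, g₀), c₀)}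
      = P ⁻¹' {x | a x = a₀ ∧ u x = u₀} ∩ F ⁻¹' {y | g u₀ y = g₀ ∧ c y = c₀} := by
    ext; grind
  have hb : (fun ω => (u (P ω), g (u (P ω)) (F ω))) ⁻¹' {(u₀, g₀)}
      = P ⁻¹' {x | u x = u₀} ∩ F ⁻¹' {y | g u₀ y = g₀} := by
    ext; grind
  have hab : (fun ω => (a (P ω), (u (P ω), g (u (P ω)) (F ω)))) ⁻¹' {(a₀, (u₀, g₀))}
      = P ⁻¹' {x | a x = a₀ ∧ u x = u₀} ∩ F ⁻¹' {y | g u₀ y = g₀} := by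
    ext; grind
  have hbc : (fun ω => ((u (P ω), g (u (P ω)) (F ω)), c (F ω))) ⁻¹' {((u₀, g₀), c₀)}
      = P ⁻¹' {x | u x = u₀} ∩ F ⁻¹' {y | g u₀ y = g₀ ∧ c y = c₀} := by
    ext; grind
  simp only [pmass, ← measureReal_def, habc, hb, hab, hbc, hrect]
  ring

variable {ι σ 𝒦 : Type*} [Finite ι] [LinearOrder ι] [MeasurableSpace σ] [MeasurableSpace 𝒦]
  {S : Ω → ι → σ} {K : Ω → 𝒦}

theorem indepFun_past_future [IsFiniteMeasure μ] (hS : Measurable S) (hK : Measurable K)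
    (hindep : iIndepFun (fun j ω => S ω j) μ) (hKS : IndepFun K S μ) (i : ι) :
    IndepFun (fun ω (j : {j // j < i}) => S ω j)
      (fun ω => ((fun j : {j // i ≤ j} => S ω j), K ω)) μ := by
  have hPF := indepFun_subtype_of_disjoint hS hindep (p := (· < i)) (q := (i ≤ ·))
    (Pi.disjoint_iff.2 fun j => disjoint_iff_inf_le.2 fun h => h.1.not_ge h.2)
  refine indepFun_prodMk_of_indepFun_prodMk (by fun_prop) (by fun_prop) hK hPF ?_
  exact hKS.symm.comp (φ := fun v => ((fun j : {j // j < i} => v j), fun j : {j // i ≤ j} => v j))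
    (by fun_prop) measurable_id

theorem condIndepRV_past_letter [IsFiniteMeasure μ] [Countable σ] [DiscreteMeasurableSpace σ]
    [Countable 𝒦] [DiscreteMeasurableSpace 𝒦] (hS : Measurable S) (hK : Measurable K)
    (hindep : iIndepFun (fun j ω => S ω j) μ) (hKS : IndepFun K S μ)
    {α 𝒳 𝒴 𝒲 : Type*} (x : σ → 𝒳) (y : σ → 𝒴) (enc : (ι → 𝒳) → 𝒦 → 𝒲) (i : ι)
    (a : ({j // j < i} → σ) → α) :
    CondIndepRV μ (fun ω => a fun j => S ω j)
      (fun ω => ((fun j : {j // j < i} => x (S ω j)), enc (fun j => x (S ω j)) (K ω), K ω,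
        fun j : {j // i ≤ j} => y (S ω j)))
      (fun ω => x (S ω i)) := by
  let glue (u : {j // j < i} → 𝒳) (f : {j // i ≤ j} → σ) (j : ι) : 𝒳 :=
    if hj : j < i then u ⟨j, hj⟩ else x (f ⟨j, not_lt.1 hj⟩)
  have hglue (ω : Ω) :
      glue (fun j => x (S ω j)) (fun j => S ω j) = fun j => x (S ω j) :=
    funext fun j => ite_self (x (S ω j))
  have hmarkov := condIndepRV_comp_of_indepFun (indepFun_past_future hS hK hindep hKS i) a
    (fun v j => x (v j)) (fun u f => (enc (glue u f.1) f.2, f.2, fun j => y (f.1 j)))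
    (fun f => x (f.1 ⟨i, le_rfl⟩))
  simpa only [hglue] using hmarkov

end Blocks

theorem secrecy_converse_data_processing_general {𝒳 𝒳t 𝒴 𝒵 𝒲 𝒦 ι : Type*}
    [Fintype 𝒳] [Fintype 𝒳t] [Fintype 𝒴] [Fintype 𝒵] [Fintype 𝒲] [Fintype 𝒦]
    [MeasurableSpace 𝒳] [DiscreteMeasurableSpace 𝒳]
    [MeasurableSpace 𝒳t] [DiscreteMeasurableSpace 𝒳t]
    [MeasurableSpace 𝒴] [DiscreteMeasurableSpace 𝒴]
    [MeasurableSpace 𝒵] [DiscreteMeasurableSpace 𝒵]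
    [MeasurableSpace 𝒦] [DiscreteMeasurableSpace 𝒦]
    [Fintype ι] [LinearOrder ι] [IsProbabilityMeasure μ]
    {S : Ω → ι → 𝒳t × 𝒳 × 𝒴 × 𝒵} {K : Ω → 𝒦} (hS : Measurable S) (hK : Measurable K)
    (hindep : iIndepFun (fun j ω => S ω j) μ) (hKS : IndepFun K S μ)
    (enc : (ι → 𝒳t) → 𝒦 → 𝒲) (i : ι) :
    let Xt : Ω → 𝒳t := fun ω => (S ω i).1
    let W : Ω → 𝒲 := fun ω => enc (fun j => (S ω j).1) (K ω)
    let XtPast : Ω → {j // j < i} → 𝒳t := fun ω j => (S ω j).1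
    let XPast : Ω → {j // j < i} → 𝒳 := fun ω j => (S ω j).2.1
    let YPast : Ω → {j // j < i} → 𝒴 := fun ω j => (S ω j).2.2.1
    let ZPast : Ω → {j // j < i} → 𝒵 := fun ω j => (S ω j).2.2.2
    let YFuture : Ω → {j // i ≤ j} → 𝒴 := fun ω j => (S ω j).2.2.1
    CondIndepRV μ YPast (fun ω => (XtPast ω, W ω, K ω, YFuture ω)) Xt ∧
    CondIndepRV μ (fun ω => (XPast ω, ZPast ω)) (fun ω => (XtPast ω, W ω, K ω, YFuture ω)) Xt ∧
    condEntropyRV μ Xt (fun ω => (YFuture ω, W ω, K ω, XtPast ω))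
      = condEntropyRV μ Xt (fun ω => (YFuture ω, W ω, K ω, XtPast ω, YPast ω)) ∧
    condEntropyRV μ Xt (fun ω => (YFuture ω, W ω, K ω, XtPast ω))
      = condEntropyRV μ Xt (fun ω => (YFuture ω, W ω, K ω, XtPast ω, XPast ω, ZPast ω)) := by
  intro Xt W XtPast XPast YPast ZPast YFuture
  let _ : MeasurableSpace 𝒲 := ⊤
  have _ : DiscreteMeasurableSpace 𝒲 := ⟨fun _ => trivial⟩
  have hW : Measurable W :=
    Measurable.of_discrete.comp (g := Function.uncurry enc)
      (f := fun ω => ((fun j => (S ω j).1), K ω)) (by fun_prop)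
  have hB : Measurable fun ω => (XtPast ω, W ω, K ω, YFuture ω) := by fun_prop
  have hY := condIndepRV_past_letter hS hK hindep hKS Prod.fst (·.2.2.1) enc i
    fun v j => (v j).2.2.1
  have hXZ := condIndepRV_past_letter hS hK hindep hKS Prod.fst (·.2.2.1) enc i
    fun v => ((fun j => (v j).2.1), fun j => (v j).2.2.2)
  refine ⟨hY, hXZ, ?_, ?_⟩
  · exact hY.condEntropyRV_comp_eq (f := fun b => (b.2.2.2, b.2.1, b.2.2.1, b.1))
      (g := fun t => (t.2.2.2.2, t.2.2.1, t.2.2.2.1, t.2.1, t.1)) (by fun_prop) hB (by fun_prop)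
      (by grind [Function.Injective]) (by grind [Function.Injective])
  · exact hXZ.condEntropyRV_comp_eq (f := fun b => (b.2.2.2, b.2.1, b.2.2.1, b.1))
      (g := fun t => (t.2.2.2.2, t.2.2.1, t.2.2.2.1, t.2.1, t.1)) (by fun_prop) hB (by fun_prop)
      (by grind [Function.Injective]) (by grind [Function.Injective])

end

/-- Under the converse setup, for every `i`: (a) `Y^{i−1}` is conditionally independent
of `X̃ᵢ` given `(X̃^{i−1}, W, K, Yᵢⁿ)`; (b) `(X^{i−1}, Z^{i−1})` is conditionally
independent of `X̃ᵢ` given `(X̃^{i−1}, W, K, Yᵢⁿ)`; consequently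
`H(X̃ᵢ | Yᵢⁿ, W, K, X̃^{i−1}) = H(X̃ᵢ | Yᵢⁿ, W, K, X̃^{i−1}, Y^{i−1})
  ≥ H(X̃ᵢ | Yᵢⁿ, W, K, X̃^{i−1}, X^{i−1}, Z^{i−1})`. -/
theorem secrecy_converse_data_processing
    {𝒳 𝒳t 𝒴 𝒵 𝒲 𝒦 : Type}
    [Fintype 𝒳] [Fintype 𝒳t] [Fintype 𝒴] [Fintype 𝒵] [Fintype 𝒲] [Fintype 𝒦]
    [MeasurableSpace 𝒳] [DiscreteMeasurableSpace 𝒳]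
    [MeasurableSpace 𝒳t] [DiscreteMeasurableSpace 𝒳t]
    [MeasurableSpace 𝒴] [DiscreteMeasurableSpace 𝒴]
    [MeasurableSpace 𝒵] [DiscreteMeasurableSpace 𝒵]
    [MeasurableSpace 𝒲] [DiscreteMeasurableSpace 𝒲]
    [MeasurableSpace 𝒦] [DiscreteMeasurableSpace 𝒦]
    {Ω : Type} [MeasurableSpace Ω] (μ : MeasureTheory.Measure Ω)
    [MeasureTheory.IsProbabilityMeasure μ]
    {n : ℕ} (S : Ω → Fin n → 𝒳t × 𝒳 × 𝒴 × 𝒵) (K : Ω → 𝒦)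
    (hSmeas : Measurable S) (hKmeas : Measurable K)
    (pX : 𝒳 → ℝ) (pXt : 𝒳 → 𝒳t → ℝ) (pYZ : 𝒳 → 𝒴 × 𝒵 → ℝ)
    (hpX0 : ∀ x, 0 ≤ pX x) (hpX1 : ∑ x, pX x = 1)
    (hpXt0 : ∀ x a, 0 ≤ pXt x a) (hpXt1 : ∀ x, ∑ a, pXt x a = 1)
    (hpYZ0 : ∀ x yz, 0 ≤ pYZ x yz) (hpYZ1 : ∀ x, ∑ yz, pYZ x yz = 1)
    (hiid : HasIIDLaw μ S (fun s => pX s.2.1 * pXt s.2.1 s.1 * pYZ s.2.1 s.2.2))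
    (hKunif : UniformRV μ K) (hKind : IndepRV μ K S)
    (enc : (Fin n → 𝒳t) → 𝒦 → 𝒲)
    :
    ∀ i : Fin n,
      CondIndepRV μ
        (fun ω => (fun j : {j : Fin n // j.1 < i} => (S ω j.1).2.2.1))
        (fun ω => ((fun j : {j : Fin n // j.1 < i} => (S ω j.1).1), enc (fun j => (S ω j).1) (K ω), K ω, (fun j : {j : Fin n // i ≤ j} => (S ω j.1).2.2.1)))
        (fun ω => (S ω i).1) ∧
      CondIndepRV μ
        (fun ω => ((fun j : {j : Fin n // j.1 < i} => (S ω j.1).2.1), (fun j : {j : Fin n // j.1 < i} => (S ω j.1).2.2.2)))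
        (fun ω => ((fun j : {j : Fin n // j.1 < i} => (S ω j.1).1), enc (fun j => (S ω j).1) (K ω), K ω, (fun j : {j : Fin n // i ≤ j} => (S ω j.1).2.2.1)))
        (fun ω => (S ω i).1) ∧
      condEntropyRV μ (fun ω => (S ω i).1)
        (fun ω => ((fun j : {j : Fin n // i ≤ j} => (S ω j.1).2.2.1), enc (fun j => (S ω j).1) (K ω), K ω, (fun j : {j : Fin n // j.1 < i} => (S ω j.1).1)))
        = condEntropyRV μ (fun ω => (S ω i).1)
            (fun ω => ((fun j : {j : Fin n // i ≤ j} => (S ω j.1).2.2.1), enc (fun j => (S ω j).1) (K ω), K ω, (fun j : {j : Fin n // j.1 < i} => (S ω j.1).1), (fun j : {j : Fin n // j.1 < i} => (S ω j.1).2.2.1))) ∧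
      condEntropyRV μ (fun ω => (S ω i).1)
        (fun ω => ((fun j : {j : Fin n // i ≤ j} => (S ω j.1).2.2.1), enc (fun j => (S ω j).1) (K ω), K ω, (fun j : {j : Fin n // j.1 < i} => (S ω j.1).1)))
        ≥ condEntropyRV μ (fun ω => (S ω i).1)
            (fun ω => ((fun j : {j : Fin n // i ≤ j} => (S ω j.1).2.2.1), enc (fun j => (S ω j).1) (K ω), K ω, (fun j : {j : Fin n // j.1 < i} => (S ω j.1).1), (fun j : {j : Fin n // j.1 < i} => (S ω j.1).2.1), (fun j : {j : Fin n // j.1 < i} => (S ω j.1).2.2.2))) := by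
  intro i
  obtain ⟨hY, hXZ, hHY, hHXZ⟩ := secrecy_converse_data_processing_general hSmeas hKmeas
    (hiid.iIndepFun hSmeas) (hKind.indepFun hKmeas hSmeas) enc i
  exact ⟨hY, hXZ, hHY, hHXZ.ge⟩
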